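/- arXiv:1805.07430 — 2 statements merged into one kernel-verified Lean document; each statement's English description precedes it below -/
import Mathlib

section
/- There is an absolute constant C > 0 (independent of N, T, η, β, u and the reward vectors) such that the following holds. Let the BARRONS iterates x_1, …, x_T be as in the context with parameters 0 < β ≤ 1/2 and 0 < η ≤ 1. For any u ∈ Δ̄_N, if β ≤ α_T(u) where α_t(u) = min{1/2, min_{s∈[t]} 1/(8·|⟨∇_s, u − x_s⟩|)}, then Reg(u) = Σ_{t=1}^T f_t(x_t) − Σ_{t=1}^T f_t(u) ≤ C·N·ln T/η + 8·N·ln T/β − (1/(8·η·ln T))·Σ_{i=1}^N max_{t∈[T]} u_i/x_{t,i}. -/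
/-!
The logarithmic loss is exp-concave: with `g = ∇f_t(x_t)`, the condition on `β` gives
`f_t(x_t) - f_t(u) ≤ ⟨g, x_t - u⟩ - (β / 2) ⟨g, x_t - u⟩²`. The mirror descent step bounds the
linear term by the decrease of the Bregman divergence `D(u, x_t)` plus a stability term. Adding the
rank-one matrix `g gᵀ` to `A_{t-1}` increases the divergence by exactly the quadratic term, and the
stability term is at most `(2β)⁻¹` times the growth of `log det A_t`.

It remains to change the learning rates. Write `η_{t,i} = η exp m_i` and `L = ln T`. Raising `m_i`
to `f = ln (1 / (N x_i)) / L` lowers the barrier weight `exp (-m_i) / η` by at least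
`(f - m_i) / (3η)`, which multiplies `y - 1 - ln y`, where `y = u_i / x_i = N u_i exp (L f)`. The
term `y` pays for the increase of `N u_i exp (L m_i) / (8 η L)`, whose final value is at least
`max_t (u_i / x_{t,i}) / (8 η L)`, while `-1 - ln y ≥ -(1 + 2L)` is absorbed by the decreasing
function `(1 + 2L) exp (-m_i) / η`. Hence divergence, rate potential and `-(2β)⁻¹ log det A_t` add
up to a Lyapunov function whose total decrease bounds the regret.
-/

open Finset Matrix
open Real (exp log)

section Scalar

theorem log_one_add_le_sub_sq_of_nonpos {z : ℝ} (hz : -1 < z) (hz0 : z ≤ 0) :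
    log (1 + z) ≤ z - z ^ 2 / 2 := by
  have hpos : 0 < 1 + z := by linarith
  have hinv : log (1 + z) = -log (1 + -z / (1 + z)) := by
    rw [← Real.log_inv]
    congr 1
    field_simp
    ring
  have hlog := Real.le_log_one_add_of_nonneg (div_nonneg (neg_nonneg.2 hz0) hpos.le)
  have hden : -z / (1 + z) + 2 = (2 + z) / (1 + z) := by
    field_simp
    ring
  have hfrac : 2 * (-z / (1 + z)) / (-z / (1 + z) + 2) = -(2 * z / (2 + z)) := by
    rw [hden]
    field_simp
  have hrat : 2 * z / (2 + z) ≤ z - z ^ 2 / 2 := by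
    rw [div_le_iff₀ (by linarith)]
    nlinarith [mul_nonneg (sq_nonneg z) (neg_nonneg.2 hz0)]
  linarith

theorem log_one_add_le_sub_sq_of_nonneg {β z : ℝ} (hβ : β ≤ 1 / 2) (hz : 0 ≤ z)
    (hβz : 8 * (β * z) ≤ 1) : log (1 + z) ≤ z - β / 2 * z ^ 2 := by
  have hfactor : 15 / 16 ≤ 1 - β * z / 2 := by linarith
  have hnonneg : 0 ≤ z * (1 - β * z / 2) := mul_nonneg hz (by linarith)
  rw [Real.log_le_iff_le_exp (by linarith)]
  calc 1 + z ≤ 1 + z * (1 - β * z / 2) + (z * (1 - β * z / 2)) ^ 2 / 2 := by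
        have : β ≤ (1 - β * z / 2) ^ 2 := by nlinarith [hfactor]
        nlinarith [mul_nonneg (sq_nonneg z) (sub_nonneg.2 this)]
    _ ≤ exp (z * (1 - β * z / 2)) := Real.quadratic_le_exp_of_nonneg hnonneg
    _ = exp (z - β / 2 * z ^ 2) := by ring_nf

theorem log_one_add_le_sub_sq {β z : ℝ} (hβ : β ≤ 1 / 2) (hz : -1 < z)
    (hβz : 8 * β * |z| ≤ 1) : log (1 + z) ≤ z - β / 2 * z ^ 2 := by
  rcases le_total 0 z with h | h
  · exact log_one_add_le_sub_sq_of_nonneg hβ h (by rwa [abs_of_nonneg h, mul_assoc] at hβz)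
  · nlinarith [log_one_add_le_sub_sq_of_nonpos hz h, sq_nonneg z]

theorem exp_sub_exp_le_mul_sub (a b : ℝ) : exp b - exp a ≤ exp b * (b - a) := by
  have hexp : exp a = exp b * exp (a - b) := by rw [← Real.exp_add, add_sub_cancel]
  nlinarith [Real.add_one_le_exp (a - b), Real.exp_pos b]

theorem sub_div_three_le_exp_neg_sub_exp_neg {a b : ℝ} (hab : a ≤ b) (hb : b ≤ 1) :
    (b - a) / 3 ≤ exp (-a) - exp (-b) := by
  have hexp : exp (-a) = exp (-b) * exp (b - a) := by rw [← Real.exp_add]; ring_nf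
  have hthird : 1 / 3 ≤ exp (-b) := by
    rw [Real.exp_neg, one_div]
    gcongr
    linarith [Real.exp_le_exp.2 hb, Real.exp_one_lt_three]
  nlinarith [Real.add_one_le_exp (b - a)]

end Scalar

section FiniteSup

variable {α : Type*} {s : Finset α} {f : α → ℝ}

theorem le_biSup_of_mem {a : α} (ha : a ∈ s) : f a ≤ ⨆ b ∈ s, f b := by
  refine le_ciSup₂ (f := fun b (_ : b ∈ s) ↦ f b) ?_ a ha
  refine (s.finite_toSet.image f).bddAbove.mono (Set.iUnion_subset fun b ↦ ?_)
  rintro _ ⟨hb, rfl⟩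
  exact Set.mem_image_of_mem f hb

theorem biSup_le_of_nonneg {c : ℝ} (hc : 0 ≤ c) (h : ∀ a ∈ s, f a ≤ c) : ⨆ a ∈ s, f a ≤ c :=
  Real.iSup_le (fun a ↦ Real.iSup_le (h a) hc) hc

-- An index outside `s` contributes `sSup ∅ = 0` to the supremum.
theorem biSup_nonneg_of_infinite [Infinite α] : 0 ≤ ⨆ a ∈ s, f a := by
  classical
  obtain ⟨b, hb⟩ := Infinite.exists_notMem_finset s
  have hbdd : BddAbove (Set.range fun a ↦ ⨆ _ : a ∈ s, f a) :=
    ((s.finite_toSet.image f).insert 0).bddAbove.mono <| by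
      rintro _ ⟨a, rfl⟩
      by_cases ha : a ∈ s
      · exact Or.inr ⟨a, ha, by simp [ha]⟩
      · exact Or.inl (by simp [ha])
  exact le_ciSup_of_le hbdd b (by simp [hb])

theorem biSup_insert_of_infinite [Infinite α] [DecidableEq α] (a : α) :
    ⨆ b ∈ insert a s, f b = max (⨆ b ∈ s, f b) (f a) := by
  apply le_antisymm
  · refine biSup_le_of_nonneg (le_max_of_le_left biSup_nonneg_of_infinite) fun b hb ↦ ?_
    rcases Finset.mem_insert.1 hb with rfl | hb
    · exact le_max_right _ _
    · exact le_max_of_le_left (le_biSup_of_mem hb)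
  · refine max_le (biSup_le_of_nonneg biSup_nonneg_of_infinite fun b hb ↦ ?_)
      (le_biSup_of_mem (mem_insert_self a s))
    exact le_biSup_of_mem (mem_insert_of_mem hb)

end FiniteSup

section LogDet

variable {n : Type*} [Fintype n]

theorem dotProduct_mulVec_comm {R : Type*} [CommSemiring R] {A : Matrix n n R} (hA : A.IsSymm)
    (v w : n → R) :
    v ⬝ᵥ A *ᵥ w = w ⬝ᵥ A *ᵥ v := by
  rw [dotProduct_mulVec, ← mulVec_transpose, hA.eq, dotProduct_comm]

variable [DecidableEq n]

theorem det_le_trace_pow {B : Matrix n n ℝ} (hB : B.PosSemidef) :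
    B.det ≤ B.trace ^ Fintype.card n := by
  have hdet := hB.isHermitian.det_eq_prod_eigenvalues
  have htrace := hB.isHermitian.trace_eq_sum_eigenvalues
  simp only [RCLike.ofReal_real_eq_id, id] at hdet htrace
  rw [hdet, htrace, ← card_univ, ← prod_const]
  exact prod_le_prod (fun i _ ↦ hB.eigenvalues_nonneg i) fun i _ ↦
    single_le_sum (fun j _ ↦ hB.eigenvalues_nonneg j) (mem_univ i)

theorem det_sub_vecMulVec {R : Type*} [CommRing R] {A : Matrix n n R} (hA : IsUnit A.det)
    (v w : n → R) :
    (A - vecMulVec v w).det = A.det * (1 - w ⬝ᵥ A⁻¹ *ᵥ v) := by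
  have h := det_add_replicateCol_mul_replicateRow (ι := Unit) hA (-v) w
  rw [← vecMulVec_eq Unit, neg_vecMulVec, ← sub_eq_add_neg] at h
  rw [h, det_unique (n := Unit), Matrix.mul_assoc, ← replicateCol_mulVec]
  simp [Matrix.mul_apply, dotProduct, mulVec_neg, sub_eq_add_neg]

theorem dotProduct_inv_mulVec_le_log_det_sub_log_det {B : Matrix n n ℝ} (hB : B.PosDef)
    (g : n → ℝ) :
    g ⬝ᵥ (B + vecMulVec g g)⁻¹ *ᵥ g ≤ log (B + vecMulVec g g).det - log B.det := by
  set A := B + vecMulVec g g with hA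
  have hApos : 0 < A.det :=
    (hB.add_posSemidef (by simpa using posSemidef_vecMulVec_self_star g)).det_pos
  have hdet : B.det = A.det * (1 - g ⬝ᵥ A⁻¹ *ᵥ g) := by
    rw [← det_sub_vecMulVec hApos.ne'.isUnit, hA, add_sub_cancel_right]
  have hratio : 0 < 1 - g ⬝ᵥ A⁻¹ *ᵥ g := pos_of_mul_pos_right (hdet ▸ hB.det_pos) hApos.le
  rw [hdet, Real.log_mul hApos.ne' hratio.ne']
  linarith [Real.log_le_sub_one_of_pos hratio]

theorem dotProduct_sub_quadratic_le_dotProduct_inv_mulVec {A : Matrix n n ℝ} (hA : A.PosDef)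
    {β : ℝ} (hβ : 0 < β) (g d : n → ℝ) :
    g ⬝ᵥ d - β / 2 * (d ⬝ᵥ A *ᵥ d) ≤ 1 / (2 * β) * (g ⬝ᵥ A⁻¹ *ᵥ g) := by
  set w := A⁻¹ *ᵥ g with hw
  have hAw : A *ᵥ w = g := by
    rw [hw, mulVec_mulVec, mul_nonsing_inv _ hA.det_pos.ne'.isUnit, one_mulVec]
  have hsymm : A.IsSymm := isHermitian_iff_isSymm.1 hA.isHermitian
  have hsquare : 0 ≤ d ⬝ᵥ A *ᵥ d - 2 * β⁻¹ * (g ⬝ᵥ d) + β⁻¹ ^ 2 * (g ⬝ᵥ w) := by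
    have h := hA.posSemidef.dotProduct_mulVec_nonneg (d - β⁻¹ • w)
    simp only [star_trivial, mulVec_sub, mulVec_smul, dotProduct_sub, sub_dotProduct,
      smul_dotProduct, dotProduct_smul, smul_eq_mul, dotProduct_mulVec_comm hsymm w d, hAw] at h
    rw [dotProduct_comm d g, dotProduct_comm w g] at h
    linarith
  have hscaled : β / 2 * (d ⬝ᵥ A *ᵥ d - 2 * β⁻¹ * (g ⬝ᵥ d) + β⁻¹ ^ 2 * (g ⬝ᵥ w)) =
      β / 2 * (d ⬝ᵥ A *ᵥ d) - g ⬝ᵥ d + 1 / (2 * β) * (g ⬝ᵥ w) := by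
    field_simp
  linarith [mul_nonneg (half_pos hβ).le hsquare]

end LogDet

section RegularizedGram

variable {n : Type*} [DecidableEq n] {κ : ℝ} {g : ℕ → n → ℝ} {t : ℕ}

/-- The regularized Gram matrix `κ I + ∑_{s=1}^t g_s g_sᵀ`. -/
def regularizedGram (κ : ℝ) (g : ℕ → n → ℝ) (t : ℕ) : Matrix n n ℝ :=
  κ • 1 + ∑ s ∈ Icc 1 t, vecMulVec (g s) (g s)

theorem regularizedGram_zero : regularizedGram κ g 0 = κ • 1 := by
  simp [regularizedGram]

theorem regularizedGram_succ :
    regularizedGram κ g (t + 1) =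
      regularizedGram κ g t + vecMulVec (g (t + 1)) (g (t + 1)) := by
  rw [regularizedGram, sum_Icc_succ_top (by omega), ← add_assoc, regularizedGram]

theorem eq_regularizedGram {T : ℕ} {A : ℕ → Matrix n n ℝ} (hA0 : A 0 = κ • 1)
    (hA : ∀ t ∈ Icc 1 T, ∀ i j, A t i j = A (t - 1) i j + g t i * g t j) (ht : t ≤ T) :
    A t = regularizedGram κ g t := by
  induction t with
  | zero => rw [hA0, regularizedGram_zero]
  | succ t ih =>
    ext i j
    rw [hA (t + 1) (by simpa using ht), Nat.add_sub_cancel, ih (by omega), regularizedGram_succ,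
      Matrix.add_apply, vecMulVec_apply]

theorem posDef_regularizedGram [Finite n] (hκ : 0 < κ) : (regularizedGram κ g t).PosDef :=
  (PosDef.one.smul hκ).add_posSemidef <| posSemidef_sum _ fun s _ ↦ by
    simpa using posSemidef_vecMulVec_self_star (g s)

variable [Fintype n]

theorem trace_regularizedGram_le {G : ℝ} (hg : ∀ s ∈ Icc 1 t, g s ⬝ᵥ g s ≤ G) :
    (regularizedGram κ g t).trace ≤ κ * Fintype.card n + t * G := by
  rw [regularizedGram, trace_add, trace_smul, trace_one, trace_sum, smul_eq_mul]
  gcongr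
  simpa [trace_vecMulVec] using sum_le_card_nsmul _ _ _ hg

theorem log_det_regularizedGram_sub_le {G : ℝ} (hκ : 0 < κ)
    (hg : ∀ s ∈ Icc 1 t, g s ⬝ᵥ g s ≤ G) :
    log (regularizedGram κ g t).det - log (regularizedGram κ g 0).det ≤
      Fintype.card n * log (Fintype.card n + t * G / κ) := by
  have hpos := posDef_regularizedGram (g := g) (t := t) hκ
  have hdet0 : (regularizedGram κ g 0).det = κ ^ Fintype.card n := by
    rw [regularizedGram_zero, det_smul, det_one, mul_one]
  rw [hdet0, ← Real.log_div hpos.det_pos.ne' (by positivity), ← Real.log_pow]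
  refine Real.log_le_log (div_pos hpos.det_pos (by positivity)) ?_
  calc (regularizedGram κ g t).det / κ ^ Fintype.card n
      ≤ (κ * Fintype.card n + t * G) ^ Fintype.card n / κ ^ Fintype.card n := by
        gcongr
        exact (det_le_trace_pow hpos.posSemidef).trans
          (pow_le_pow_left₀ hpos.posSemidef.trace_nonneg (trace_regularizedGram_le hg) _)
    _ = (Fintype.card n + t * G / κ) ^ Fintype.card n := by
        rw [← div_pow, add_div, mul_div_cancel_left₀ _ hκ.ne']

end RegularizedGram

section BarrierDivergence

/-- The Itakura–Saito divergence, which is the Bregman divergence of `-log`. -/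
noncomputable def itakuraSaito (a b : ℝ) : ℝ :=
  a / b - 1 - log (a / b)

theorem itakuraSaito_nonneg {a b : ℝ} (ha : 0 < a) (hb : 0 < b) : 0 ≤ itakuraSaito a b :=
  sub_nonneg.2 (Real.log_le_sub_one_of_pos (div_pos ha hb))

theorem itakuraSaito_three_point {a b c : ℝ} (ha : 0 < a) (hb : 0 < b) (hc : 0 < c) :
    itakuraSaito a c =
      itakuraSaito a b + itakuraSaito b c + (1 / c - 1 / b) * (a - b) := by
  simp only [itakuraSaito]
  rw [Real.log_div ha.ne' hc.ne', Real.log_div ha.ne' hb.ne', Real.log_div hb.ne' hc.ne']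
  field_simp
  ring

theorem hasDerivAt_itakuraSaito {a b : ℝ} (ha : a ≠ 0) (hb : b ≠ 0) :
    HasDerivAt (fun x ↦ itakuraSaito x b) (1 / b - 1 / a) a := by
  have h := (((hasDerivAt_id a).div_const b).sub_const 1).sub
    (((hasDerivAt_id a).div_const b).log (div_ne_zero ha hb))
  refine h.congr_deriv ?_
  rw [id, div_div_div_cancel_right₀ hb]

variable {n : Type*} [Fintype n] {β : ℝ} {A : Matrix n n ℝ} {c : n → ℝ}

/-- The Bregman divergence of `p ↦ β / 2 * pᵀ A p + ∑ i, c i * log (1 / p i)` for symmetric `A`,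
written so that its two nonnegative parts are visible. -/
noncomputable def barrierDiv (β : ℝ) (A : Matrix n n ℝ) (c p q : n → ℝ) : ℝ :=
  β / 2 * ((p - q) ⬝ᵥ A *ᵥ (p - q)) + ∑ i, c i * itakuraSaito (p i) (q i)

/-- The gradient at `p` of `barrierDiv β A c · q`. -/
noncomputable def barrierDivGrad (β : ℝ) (A : Matrix n n ℝ) (c p q : n → ℝ) : n → ℝ :=
  β • A *ᵥ (p - q) + fun i ↦ c i * (1 / q i - 1 / p i)

theorem bregman_eq_barrierDiv (hA : A.IsSymm) {p q : n → ℝ} (hp : ∀ i, 0 < p i)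
    (hq : ∀ i, 0 < q i) :
    (β / 2 * ∑ i, ∑ j, p i * A i j * p j + ∑ i, c i * log (1 / p i))
      - (β / 2 * ∑ i, ∑ j, q i * A i j * q j + ∑ i, c i * log (1 / q i))
      - ∑ i, (β * (∑ j, A i j * q j) - c i * (1 / q i)) * (p i - q i)
      = barrierDiv β A c p q := by
  have hquad (v : n → ℝ) : ∑ i, ∑ j, v i * A i j * v j = v ⬝ᵥ A *ᵥ v := by
    simp only [dotProduct, mulVec, mul_sum, mul_assoc]
  have hlinear : ∑ i, (β * (∑ j, A i j * q j) - c i * (1 / q i)) * (p i - q i) =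
      β * ((p - q) ⬝ᵥ A *ᵥ q) - ∑ i, c i * (1 / q i) * (p i - q i) := by
    rw [dotProduct, mul_sum, ← sum_sub_distrib]
    refine sum_congr rfl fun i _ ↦ ?_
    simp only [mulVec, dotProduct, Pi.sub_apply]
    ring
  have hbarrier : ∑ i, c i * itakuraSaito (p i) (q i) =
      ∑ i, c i * log (1 / p i) - ∑ i, c i * log (1 / q i)
        + ∑ i, c i * (1 / q i) * (p i - q i) := by
    rw [← sum_sub_distrib, ← sum_add_distrib]
    refine sum_congr rfl fun i _ ↦ ?_
    have hqi := (hq i).ne'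
    rw [itakuraSaito, Real.log_div (hp i).ne' hqi, one_div, one_div, Real.log_inv, Real.log_inv]
    field_simp
    ring
  rw [hquad, hquad, hlinear, barrierDiv, hbarrier]
  simp only [mulVec_sub, dotProduct_sub, sub_dotProduct]
  rw [dotProduct_mulVec_comm hA q p]
  ring

theorem quadratic_le_barrierDiv (hc : ∀ i, 0 ≤ c i) {p q : n → ℝ} (hp : ∀ i, 0 < p i)
    (hq : ∀ i, 0 < q i) : β / 2 * ((p - q) ⬝ᵥ A *ᵥ (p - q)) ≤ barrierDiv β A c p q :=
  le_add_of_nonneg_right <| sum_nonneg fun i _ ↦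
    mul_nonneg (hc i) (itakuraSaito_nonneg (hp i) (hq i))

theorem barrierDiv_nonneg (hβ : 0 ≤ β) (hA : A.PosSemidef) (hc : ∀ i, 0 ≤ c i) {p q : n → ℝ}
    (hp : ∀ i, 0 < p i) (hq : ∀ i, 0 < q i) : 0 ≤ barrierDiv β A c p q := by
  refine le_trans (mul_nonneg (div_nonneg hβ zero_le_two) ?_) (quadratic_le_barrierDiv hc hp hq)
  simpa using hA.dotProduct_mulVec_nonneg (p - q)

theorem barrierDiv_three_point (hA : A.IsSymm) {u y w : n → ℝ} (hu : ∀ i, 0 < u i)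
    (hy : ∀ i, 0 < y i) (hw : ∀ i, 0 < w i) :
    barrierDiv β A c u w =
      barrierDiv β A c u y + barrierDiv β A c y w + barrierDivGrad β A c y w ⬝ᵥ (u - y) := by
  have hquad : (u - w) ⬝ᵥ A *ᵥ (u - w) = (u - y) ⬝ᵥ A *ᵥ (u - y) + (y - w) ⬝ᵥ A *ᵥ (y - w)
      + 2 * ((A *ᵥ (y - w)) ⬝ᵥ (u - y)) := by
    rw [← sub_add_sub_cancel u y w, mulVec_add, dotProduct_add, add_dotProduct, add_dotProduct,
      dotProduct_mulVec_comm hA (y - w) (u - y), dotProduct_comm (A *ᵥ (y - w))]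
    ring
  have hbarrier : ∑ i, c i * itakuraSaito (u i) (w i) =
      ∑ i, c i * itakuraSaito (u i) (y i) + ∑ i, c i * itakuraSaito (y i) (w i)
        + (fun i ↦ c i * (1 / w i - 1 / y i)) ⬝ᵥ (u - y) := by
    rw [dotProduct, ← sum_add_distrib, ← sum_add_distrib]
    refine sum_congr rfl fun i _ ↦ ?_
    rw [itakuraSaito_three_point (hu i) (hy i) (hw i), Pi.sub_apply]
    ring
  simp only [barrierDiv, barrierDivGrad, hquad, hbarrier, add_dotProduct, smul_dotProduct,
    smul_eq_mul]
  ring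

theorem hasLineDerivAt_dotProduct_mulVec_self (hA : A.IsSymm) (p v : n → ℝ) :
    HasLineDerivAt ℝ (fun y ↦ y ⬝ᵥ A *ᵥ y) (2 * ((A *ᵥ p) ⬝ᵥ v)) p v := by
  have hexpand (t : ℝ) : (p + t • v) ⬝ᵥ A *ᵥ (p + t • v) =
      p ⬝ᵥ A *ᵥ p + t * (2 * ((A *ᵥ p) ⬝ᵥ v)) + t ^ 2 * (v ⬝ᵥ A *ᵥ v) := by
    rw [mulVec_add, mulVec_smul]
    simp only [dotProduct_add, add_dotProduct, dotProduct_smul, smul_dotProduct, smul_eq_mul]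
    rw [dotProduct_mulVec_comm hA p v, dotProduct_comm (A *ᵥ p) v]
    ring
  have h := (((hasDerivAt_id (0 : ℝ)).mul_const (2 * ((A *ᵥ p) ⬝ᵥ v))).const_add
    (p ⬝ᵥ A *ᵥ p)).add ((hasDerivAt_pow 2 (0 : ℝ)).mul_const (v ⬝ᵥ A *ᵥ v))
  simp only [HasLineDerivAt, hexpand]
  exact h.congr_deriv (by simp)

theorem hasLineDerivAt_barrierDiv (hA : A.IsSymm) {p q : n → ℝ} (hp : ∀ i, p i ≠ 0)
    (hq : ∀ i, q i ≠ 0) (v : n → ℝ) :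
    HasLineDerivAt ℝ (fun y ↦ barrierDiv β A c y q) (barrierDivGrad β A c p q ⬝ᵥ v) p v := by
  have hquad : HasDerivAt (fun t : ℝ ↦ β / 2 * ((p + t • v - q) ⬝ᵥ A *ᵥ (p + t • v - q)))
      (β * ((A *ᵥ (p - q)) ⬝ᵥ v)) 0 := by
    have h := (hasLineDerivAt_dotProduct_mulVec_self hA (p - q) v).const_mul (β / 2)
    simp only [← add_sub_right_comm] at h
    exact h.congr_deriv (by ring)
  have hbarrier : HasDerivAt (fun t : ℝ ↦ ∑ i, c i * itakuraSaito ((p + t • v) i) (q i))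
      (∑ i, c i * ((1 / q i - 1 / p i) * v i)) 0 := by
    refine HasDerivAt.fun_sum fun i _ ↦ HasDerivAt.const_mul (c i) ?_
    have hline : HasDerivAt (fun t : ℝ ↦ (p + t • v) i) (v i) 0 := by
      simpa using ((hasDerivAt_id (0 : ℝ)).mul_const (v i)).const_add (p i)
    have h : HasDerivAt (itakuraSaito · (q i)) (1 / q i - 1 / p i) ((p + (0 : ℝ) • v) i) := by
      rw [zero_smul, add_zero]
      exact hasDerivAt_itakuraSaito (hp i) (hq i)
    exact h.comp (0 : ℝ) hline
  refine (hquad.add hbarrier).congr_deriv ?_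
  rw [barrierDivGrad, add_dotProduct, smul_dotProduct, smul_eq_mul]
  simp only [dotProduct, mul_assoc]

end BarrierDivergence

section MirrorDescent

theorem nonneg_of_isMinOn_of_hasLineDerivAt {E : Type*} [AddCommGroup E] [Module ℝ E]
    {K : Set E} (hK : Convex ℝ K) {f : E → ℝ} {z u : E} (hz : z ∈ K) (hu : u ∈ K)
    (hmin : IsMinOn f K z) {f' : ℝ} (hf : HasLineDerivAt ℝ f f' z (u - z)) : 0 ≤ f' := by
  refine ge_of_tendsto hf.tendsto_slope_zero_right ?_
  filter_upwards [Ioo_mem_nhdsGT one_pos] with t ht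
  have hmem : z + t • (u - z) ∈ K := hK.add_smul_sub_mem hz hu ⟨ht.1.le, ht.2.le⟩
  exact smul_nonneg (inv_nonneg.2 ht.1.le) (sub_nonneg.2 (hmin hmem))

variable {n : Type*} [Fintype n] {β : ℝ} {A : Matrix n n ℝ} {c g u w z : n → ℝ}
  {K : Set (n → ℝ)}

theorem dotProduct_sub_le_of_isMinOn (hA : A.IsSymm) (hK : Convex ℝ K)
    (hKpos : ∀ y ∈ K, ∀ i, 0 < y i) (hw : w ∈ K) (hz : z ∈ K) (hu : u ∈ K)
    (hmin : IsMinOn (fun y ↦ y ⬝ᵥ g + barrierDiv β A c y w) K z) :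
    g ⬝ᵥ (z - u) ≤ barrierDiv β A c u w - barrierDiv β A c u z - barrierDiv β A c z w := by
  have hlinear : HasLineDerivAt ℝ (fun y ↦ y ⬝ᵥ g) ((u - z) ⬝ᵥ g) z (u - z) := by
    simpa [HasLineDerivAt, add_dotProduct, smul_dotProduct] using
      ((hasDerivAt_id (0 : ℝ)).mul_const ((u - z) ⬝ᵥ g)).const_add (z ⬝ᵥ g)
  have hoptimal := nonneg_of_isMinOn_of_hasLineDerivAt hK hz hu hmin
    (hlinear.add (hasLineDerivAt_barrierDiv hA (fun i ↦ (hKpos z hz i).ne')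
      (fun i ↦ (hKpos w hw i).ne') _))
  have hthree := barrierDiv_three_point (β := β) (c := c) hA (hKpos u hu) (hKpos z hz) (hKpos w hw)
  rw [← neg_sub u z, dotProduct_neg, dotProduct_comm]
  linarith

theorem dotProduct_sub_sub_sq_le_of_isMinOn [DecidableEq n] (hβ : 0 < β) (hA : A.PosDef)
    (hc : ∀ i, 0 ≤ c i) (hK : Convex ℝ K) (hKpos : ∀ y ∈ K, ∀ i, 0 < y i)
    (hw : w ∈ K) (hz : z ∈ K) (hu : u ∈ K)
    (hmin : IsMinOn (fun y ↦ y ⬝ᵥ g + barrierDiv β (A + vecMulVec g g) c y w) K z) :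
    g ⬝ᵥ (w - u) - β / 2 * (g ⬝ᵥ (w - u)) ^ 2 ≤
      barrierDiv β A c u w - barrierDiv β (A + vecMulVec g g) c u z
        + 1 / (2 * β) * (log (A + vecMulVec g g).det - log A.det) := by
  have hB : (A + vecMulVec g g).PosDef :=
    hA.add_posSemidef (by simpa using posSemidef_vecMulVec_self_star g)
  have hmirror := dotProduct_sub_le_of_isMinOn (isHermitian_iff_isSymm.1 hB.isHermitian)
    hK hKpos hw hz hu hmin
  have hstability : g ⬝ᵥ (w - z) - barrierDiv β (A + vecMulVec g g) c z w ≤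
      1 / (2 * β) * (log (A + vecMulVec g g).det - log A.det) := by
    have hquad := quadratic_le_barrierDiv (β := β) (A := A + vecMulVec g g) hc
      (hKpos z hz) (hKpos w hw)
    rw [← neg_sub w z, mulVec_neg, neg_dotProduct_neg] at hquad
    calc _ ≤ _ := by linarith [hquad]
      _ ≤ _ := dotProduct_sub_quadratic_le_dotProduct_inv_mulVec hB hβ g (w - z)
      _ ≤ _ := by gcongr; exact dotProduct_inv_mulVec_le_log_det_sub_log_det hA g
  have hrank : barrierDiv β (A + vecMulVec g g) c u w =
      barrierDiv β A c u w + β / 2 * (g ⬝ᵥ (w - u)) ^ 2 := by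
    have hsq : (u - w) ⬝ᵥ vecMulVec g g *ᵥ (u - w) = (g ⬝ᵥ (w - u)) ^ 2 := by
      rw [← neg_sub w u, mulVec_neg, neg_dotProduct_neg, vecMulVec_mulVec, dotProduct_smul,
        dotProduct_comm, op_smul_eq_smul, smul_eq_mul, sq]
    rw [barrierDiv, barrierDiv, add_mulVec, dotProduct_add, hsq]
    ring
  have hsplit : g ⬝ᵥ (w - u) = g ⬝ᵥ (w - z) + g ⬝ᵥ (z - u) := by
    rw [← dotProduct_add, sub_add_sub_cancel]
  linarith

end MirrorDescent

section LogLoss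

variable {ι : Type*} [Fintype ι] {δ : ℝ} {p q r u x : ι → ℝ}

/-- The probability vectors all of whose entries are at least `δ`. -/
def truncatedSimplex (ι : Type*) [Fintype ι] (δ : ℝ) : Set (ι → ℝ) :=
  stdSimplex ℝ ι ∩ Set.Ici fun _ ↦ δ

theorem mem_truncatedSimplex :
    p ∈ truncatedSimplex ι δ ↔ (∀ i, 0 ≤ p i) ∧ ∑ i, p i = 1 ∧ ∀ i, δ ≤ p i :=
  and_assoc

theorem convex_truncatedSimplex : Convex ℝ (truncatedSimplex ι δ) :=
  (convex_stdSimplex ℝ ι).inter (convex_Ici _)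

theorem pos_of_mem_truncatedSimplex (hδ : 0 < δ) (hp : p ∈ truncatedSimplex ι δ) (i : ι) :
    0 < p i :=
  hδ.trans_le (hp.2 i)

theorem dotProduct_sub_self_le_two (hp : p ∈ stdSimplex ℝ ι) (hq : q ∈ stdSimplex ℝ ι) :
    (p - q) ⬝ᵥ (p - q) ≤ 2 := by
  calc (p - q) ⬝ᵥ (p - q) ≤ ∑ i, (p i + q i) := sum_le_sum fun i _ ↦ by
        rw [Pi.sub_apply]
        nlinarith [hp.1 i, hq.1 i, (mem_Icc_of_mem_stdSimplex hp i).2,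
          (mem_Icc_of_mem_stdSimplex hq i).2]
    _ = 2 := by rw [sum_add_distrib, hp.2, hq.2, one_add_one_eq_two]

theorem mul_sum_le_dotProduct (hp : p ∈ truncatedSimplex ι δ) (hr : 0 ≤ r) :
    δ * ∑ i, r i ≤ p ⬝ᵥ r := by
  rw [mul_sum]
  exact sum_le_sum fun i _ ↦ mul_le_mul_of_nonneg_right (hp.2 i) (hr i)

theorem dotProduct_pos_of_mem_truncatedSimplex (hδ : 0 < δ) (hp : p ∈ truncatedSimplex ι δ)
    (hr : 0 < r) : 0 < p ⬝ᵥ r :=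
  (mul_pos hδ (Fintype.sum_pos hr)).trans_le (mul_sum_le_dotProduct hp hr.le)

/-- The gradient at `x` of the logarithmic loss `x ↦ -log ⟨x, r⟩`. -/
noncomputable def logLossGrad (x r : ι → ℝ) : ι → ℝ :=
  -(x ⬝ᵥ r)⁻¹ • r

theorem one_add_logLossGrad_dotProduct_sub (hx : x ⬝ᵥ r ≠ 0) :
    1 + logLossGrad x r ⬝ᵥ (x - u) = (u ⬝ᵥ r) / (x ⬝ᵥ r) := by
  rw [logLossGrad, smul_dotProduct, dotProduct_sub, dotProduct_comm r x, dotProduct_comm r u,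
    smul_eq_mul]
  field_simp
  ring

theorem log_loss_sub_le {β : ℝ} (hβ : β ≤ 1 / 2) (hx : 0 < x ⬝ᵥ r) (hu : 0 < u ⬝ᵥ r)
    (hβu : 8 * β * |logLossGrad x r ⬝ᵥ (u - x)| ≤ 1) :
    -log (x ⬝ᵥ r) - -log (u ⬝ᵥ r) ≤
      logLossGrad x r ⬝ᵥ (x - u) - β / 2 * (logLossGrad x r ⬝ᵥ (x - u)) ^ 2 := by
  have hratio := one_add_logLossGrad_dotProduct_sub (u := u) hx.ne'
  have hpos : 0 < (u ⬝ᵥ r) / (x ⬝ᵥ r) := div_pos hu hx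
  rw [← neg_sub x u, dotProduct_neg, abs_neg] at hβu
  calc -log (x ⬝ᵥ r) - -log (u ⬝ᵥ r) = log (1 + logLossGrad x r ⬝ᵥ (x - u)) := by
        rw [hratio, Real.log_div hu.ne' hx.ne']
        ring
    _ ≤ _ := log_one_add_le_sub_sq hβ (by linarith) hβu

theorem logLossGrad_dotProduct_self_le (hδ : 0 < δ) (hx : x ∈ truncatedSimplex ι δ)
    (hr : 0 < r) : logLossGrad x r ⬝ᵥ logLossGrad x r ≤ (δ⁻¹) ^ 2 := by
  have hxr := dotProduct_pos_of_mem_truncatedSimplex hδ hx hr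
  have hnorm : r ⬝ᵥ r ≤ (δ⁻¹ * (x ⬝ᵥ r)) ^ 2 := by
    calc r ⬝ᵥ r = ∑ i, r i ^ 2 := by simp only [dotProduct, sq]
      _ ≤ (∑ i, r i) ^ 2 := sum_sq_le_sq_sum_of_nonneg fun i _ ↦ hr.le i
      _ ≤ (δ⁻¹ * (x ⬝ᵥ r)) ^ 2 := by
        gcongr
        · exact sum_nonneg fun i _ ↦ hr.le i
        · rw [le_inv_mul_iff₀ hδ]
          exact mul_sum_le_dotProduct hx hr.le
  rw [logLossGrad, smul_dotProduct, dotProduct_smul, smul_eq_mul, smul_eq_mul]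
  calc -(x ⬝ᵥ r)⁻¹ * (-(x ⬝ᵥ r)⁻¹ * (r ⬝ᵥ r)) = (x ⬝ᵥ r)⁻¹ ^ 2 * (r ⬝ᵥ r) := by ring
    _ ≤ (x ⬝ᵥ r)⁻¹ ^ 2 * (δ⁻¹ * (x ⬝ᵥ r)) ^ 2 := by gcongr
    _ = (δ⁻¹) ^ 2 := by field_simp

end LogLoss

section RatePotential

variable {a f m y L : ℝ}

/-- The coordinatewise potential of a learning rate with exponent `m`. Its increasing first
summand is the negative term of the regret bound; its decreasing second summand pays for it. -/
noncomputable def ratePotential (L a m : ℝ) : ℝ :=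
  1 / (8 * L) * (a * exp (L * m)) + (1 + 2 * L) * exp (-m)

theorem exp_neg_mul_add_ratePotential_max_le (hL : 0 < L) (ha : 0 ≤ a) (hf : f ≤ 1)
    (hy : y = a * exp (L * f)) (hlog : log y ≤ 2 * L) :
    exp (-max m f) * (y - 1 - log y) + ratePotential L a (max m f) ≤
      exp (-m) * (y - 1 - log y) + ratePotential L a m := by
  rcases le_total f m with hfm | hmf
  · rw [max_eq_left hfm]
  rw [max_eq_right hmf, ratePotential, ratePotential]
  have hy0 : 0 ≤ y := hy ▸ mul_nonneg ha (Real.exp_pos _).le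
  have hexp := sub_div_three_le_exp_neg_sub_exp_neg hmf hf
  have hgrowth : 1 / (8 * L) * (a * exp (L * f)) - 1 / (8 * L) * (a * exp (L * m)) ≤
      (f - m) / 8 * y := by
    calc 1 / (8 * L) * (a * exp (L * f)) - 1 / (8 * L) * (a * exp (L * m))
        = 1 / (8 * L) * (a * (exp (L * f) - exp (L * m))) := by ring
      _ ≤ 1 / (8 * L) * (a * (exp (L * f) * (L * f - L * m))) := by
          gcongr
          exact exp_sub_exp_le_mul_sub _ _
      _ = (f - m) / 8 * y := by
          rw [hy]
          field_simp
  have hdecay : (f - m) / 3 * y ≤ (exp (-m) - exp (-f)) * (y - log y + 2 * L) := by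
    gcongr
    · linarith
    · linarith
  nlinarith [mul_nonneg (sub_nonneg.2 hmf) hy0]

theorem ratePotential_zero_le (hL : 1 / 2 ≤ L) :
    ratePotential L a 0 ≤ 1 / (8 * L) * a + 4 * L := by
  simp only [ratePotential, mul_zero, neg_zero, Real.exp_zero, mul_one]
  linarith

end RatePotential

section RateExponent

variable {ι : Type*} [Fintype ι] {T t : ℕ} {β η : ℝ} {x : ℕ → ι → ℝ} {u : ι → ℝ}

/-- The exponent of the learning rate of coordinate `i` after `t` rounds, so that
`η_{t,i} = η * exp (rateExponent T x t i)`. An `s ∉ Icc 1 t` contributes the junk value `0` to the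
supremum, which is harmless because `x 1` is uniform; in particular the exponent starts at `0` for
`t = 0`. -/
noncomputable def rateExponent (T : ℕ) (x : ℕ → ι → ℝ) (t : ℕ) (i : ι) : ℝ :=
  ⨆ s ∈ Icc 1 t, log (1 / (Fintype.card ι * x s i)) / log T

/-- The learning rate `η_{t,i}` of BARRONS. -/
noncomputable def learningRate (η : ℝ) (T : ℕ) (x : ℕ → ι → ℝ) (t : ℕ) (i : ι) : ℝ :=
  η * exp (rateExponent T x t i)

theorem rateExponent_zero (i : ι) : rateExponent T x 0 i = 0 := by
  simp [rateExponent]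

theorem rateExponent_succ (i : ι) :
    rateExponent T x (t + 1) i =
      max (rateExponent T x t i) (log (1 / (Fintype.card ι * x (t + 1) i)) / log T) := by
  rw [rateExponent, ← insert_Icc_right_eq_Icc_add_one (by simp), biSup_insert_of_infinite,
    rateExponent]

theorem one_div_learningRate (i : ι) :
    1 / learningRate η T x t i = 1 / η * exp (-rateExponent T x t i) := by
  rw [learningRate, Real.exp_neg, one_div, one_div, mul_inv]

theorem mul_exp_mul_log_div {a b k L : ℝ} (hb : 0 < b) (hk : 0 < k) (hL : L ≠ 0) :
    k * a * exp (L * (log (1 / (k * b)) / L)) = a / b := by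
  rw [mul_div_cancel₀ _ hL, Real.exp_log (by positivity)]
  field_simp

variable [Nonempty ι]

theorem half_le_log_of_card_lt (hT : Fintype.card ι < T) : 1 / 2 ≤ log T := by
  have hT2 : 2 ≤ T := (Nat.succ_le_succ Fintype.card_pos).trans hT
  calc (1 : ℝ) / 2 ≤ log 2 := by linarith [Real.log_two_gt_d9]
    _ ≤ log T := Real.log_le_log two_pos (by exact_mod_cast hT2)

theorem one_div_card_mul_pos (hT : Fintype.card ι < T) : 0 < 1 / ((Fintype.card ι : ℝ) * T) := by
  have hT0 : 0 < T := Nat.zero_lt_of_lt hT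
  positivity

theorem log_one_div_card_mul_le (hT : Fintype.card ι < T) {p : ι → ℝ}
    (hp : p ∈ truncatedSimplex ι (1 / (Fintype.card ι * T))) (i : ι) :
    log (1 / (Fintype.card ι * p i)) ≤ log T := by
  have hT0 : (0 : ℝ) < T := Nat.cast_pos.2 (Nat.zero_lt_of_lt hT)
  have hpi := pos_of_mem_truncatedSimplex (one_div_card_mul_pos hT) hp i
  refine Real.log_le_log (by positivity) ?_
  have h : 1 / ((Fintype.card ι : ℝ) * T) ≤ p i := hp.2 i
  rw [div_le_iff₀ (by positivity)] at h ⊢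
  linarith

theorem log_div_le_two_mul_log (hT : Fintype.card ι < T) {p : ι → ℝ}
    (hp : p ∈ truncatedSimplex ι (1 / (Fintype.card ι * T)))
    (hu : u ∈ truncatedSimplex ι (1 / (Fintype.card ι * T))) (i : ι) :
    log (u i / p i) ≤ 2 * log T := by
  have hN : (0 : ℝ) < Fintype.card ι := Nat.cast_pos.2 Fintype.card_pos
  have hui := pos_of_mem_truncatedSimplex (one_div_card_mul_pos hT) hu i
  have hpi := pos_of_mem_truncatedSimplex (one_div_card_mul_pos hT) hp i
  have hlog := log_one_div_card_mul_le hT hp i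
  have hlogN : log (Fintype.card ι) ≤ log T := Real.log_le_log hN (by exact_mod_cast hT.le)
  have hlogu : log (u i) ≤ 0 := Real.log_nonpos hui.le (mem_Icc_of_mem_stdSimplex hu.1 i |>.2)
  rw [one_div, Real.log_inv, Real.log_mul hN.ne' hpi.ne'] at hlog
  rw [Real.log_div hui.ne' hpi.ne']
  linarith

theorem sum_itakuraSaito_add_ratePotential_le (hT : Fintype.card ι < T)
    (hu : u ∈ truncatedSimplex ι (1 / (Fintype.card ι * T))) :
    ∑ i, (itakuraSaito (u i) (1 / Fintype.card ι)
      + ratePotential (log T) (Fintype.card ι * u i) 0) ≤ 6 * Fintype.card ι * log T := by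
  have hL := half_le_log_of_card_lt hT
  have hcoord (i : ι) : itakuraSaito (u i) (1 / Fintype.card ι)
      + ratePotential (log T) (Fintype.card ι * u i) 0 ≤
        (Fintype.card ι + 1 / (8 * log T) * Fintype.card ι) * u i - 1 + 5 * log T := by
    have hlog := log_one_div_card_mul_le hT hu i
    have hrate := ratePotential_zero_le (a := Fintype.card ι * u i) hL
    rw [itakuraSaito, div_div_eq_mul_div, div_one, mul_comm (u i)]
    rw [one_div, Real.log_inv] at hlog
    linarith
  calc _ ≤ ∑ i, ((Fintype.card ι + 1 / (8 * log T) * Fintype.card ι) * u i - 1 + 5 * log T) :=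
        sum_le_sum fun i _ ↦ hcoord i
    _ = Fintype.card ι * (1 / (8 * log T) + 5 * log T) := by
        rw [sum_add_distrib, sum_sub_distrib, ← mul_sum, hu.1.2]
        simp
        ring
    _ ≤ Fintype.card ι * (6 * log T) := by
        gcongr
        have : 1 / (8 * log T) ≤ log T := by
          rw [div_le_iff₀ (by linarith)]
          nlinarith
        linarith
    _ = _ := by ring

theorem barrierDiv_add_ratePotential_succ_le (hη : 0 < η) (hT : Fintype.card ι < T)
    (hx : x (t + 1) ∈ truncatedSimplex ι (1 / (Fintype.card ι * T)))
    (hu : u ∈ truncatedSimplex ι (1 / (Fintype.card ι * T))) (A : Matrix ι ι ℝ) :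
    barrierDiv β A (fun i ↦ 1 / learningRate η T x (t + 1) i) u (x (t + 1))
        + 1 / η * ∑ i, ratePotential (log T) (Fintype.card ι * u i) (rateExponent T x (t + 1) i) ≤
      barrierDiv β A (fun i ↦ 1 / learningRate η T x t i) u (x (t + 1))
        + 1 / η * ∑ i, ratePotential (log T) (Fintype.card ι * u i) (rateExponent T x t i) := by
  have hL : 0 < log T := one_half_pos.trans_le (half_le_log_of_card_lt hT)
  have hδ := one_div_card_mul_pos hT
  simp only [barrierDiv, one_div_learningRate, mul_assoc, ← mul_sum, add_assoc, ← mul_add,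
    ← sum_add_distrib]
  refine add_le_add_right (mul_le_mul_of_nonneg_left (sum_le_sum fun i _ ↦ ?_)
    (one_div_pos.2 hη).le) _
  rw [rateExponent_succ]
  refine exp_neg_mul_add_ratePotential_max_le hL
    (mul_nonneg (Nat.cast_nonneg _) (hu.1.1 i)) ?_
    (mul_exp_mul_log_div (pos_of_mem_truncatedSimplex hδ hx i)
      (Nat.cast_pos.2 Fintype.card_pos) hL.ne').symm
    (log_div_le_two_mul_log hT hx hu i)
  exact (div_le_one hL).2 (log_one_div_card_mul_le hT hx i)

end RateExponent

theorem sum_Icc_one_le_sub {T : ℕ} {f V : ℕ → ℝ}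
    (h : ∀ t < T, f (t + 1) ≤ V t - V (t + 1)) :
    ∑ t ∈ Icc 1 T, f t ≤ V 0 - V T := by
  calc ∑ t ∈ Icc 1 T, f t = ∑ t ∈ range T, f (t + 1) := by
        rw [range_eq_Ico, sum_Ico_add' f 0 T 1]
        rfl
    _ ≤ ∑ t ∈ range T, (V t - V (t + 1)) := sum_le_sum fun t ht ↦ h t (mem_range.1 ht)
    _ = V 0 - V T := sum_range_sub' V T

section BarronsRun

variable {ι : Type*} [Fintype ι] [DecidableEq ι] {T t : ℕ} {β η : ℝ} {r x : ℕ → ι → ℝ} {u : ι → ℝ}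

/-- The matrix `A_t` of the BARRONS regularizer `ψ_t`. -/
noncomputable def barronsGram (r x : ℕ → ι → ℝ) (t : ℕ) : Matrix ι ι ℝ :=
  regularizedGram (Fintype.card ι) (fun s ↦ logLossGrad (x s) (r s)) t

/-- `x 1, …, x (T + 1)` are the BARRONS iterates for the rewards `r 1, …, r T`. The Bregman
divergence of `ψ_t` is expressed as a `barrierDiv`. -/
structure IsBarronsRun (T : ℕ) (β η : ℝ) (r x : ℕ → ι → ℝ) : Prop where
  one_eq (i : ι) : x 1 i = 1 / Fintype.card ι
  mem : ∀ t ∈ Icc 1 (T + 1), x t ∈ truncatedSimplex ι (1 / (Fintype.card ι * T))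
  isMinOn : ∀ t ∈ Icc 1 T, IsMinOn
    (fun y ↦ y ⬝ᵥ logLossGrad (x t) (r t) +
      barrierDiv β (barronsGram r x t) (fun i ↦ 1 / learningRate η T x t i) y (x t))
    (truncatedSimplex ι (1 / (Fintype.card ι * T))) (x (t + 1))

/-- The Lyapunov function of the regret analysis, relative to the comparator `u`. -/
noncomputable def barronsPotential (T : ℕ) (β η : ℝ) (r x : ℕ → ι → ℝ) (u : ι → ℝ) (t : ℕ) : ℝ :=
  barrierDiv β (barronsGram r x t) (fun i ↦ 1 / learningRate η T x t i) u (x (t + 1))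
    + 1 / η * ∑ i, ratePotential (log T) (Fintype.card ι * u i) (rateExponent T x t i)
    - 1 / (2 * β) * log (barronsGram r x t).det

theorem barronsGram_zero : barronsGram r x 0 = (Fintype.card ι : ℝ) • 1 :=
  regularizedGram_zero

theorem barronsGram_succ :
    barronsGram r x (t + 1) = barronsGram r x t
      + vecMulVec (logLossGrad (x (t + 1)) (r (t + 1))) (logLossGrad (x (t + 1)) (r (t + 1))) :=
  regularizedGram_succ

variable [Nonempty ι]

theorem posDef_barronsGram : (barronsGram r x t).PosDef :=
  posDef_regularizedGram (Nat.cast_pos.2 Fintype.card_pos)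

theorem isBarronsRun_of_regularizer (hx1 : ∀ i, x 1 i = 1 / Fintype.card ι)
    (hx : ∀ t ∈ Icc 1 (T + 1), x t ∈ truncatedSimplex ι (1 / (Fintype.card ι * T)))
    {grad : ℕ → ι → ℝ} (hgrad : ∀ t, grad t = logLossGrad (x t) (r t))
    {A : ℕ → Matrix ι ι ℝ} (hA0 : A 0 = (Fintype.card ι : ℝ) • 1)
    (hA : ∀ t ∈ Icc 1 T, ∀ i j, A t i j = A (t - 1) i j + grad t i * grad t j)
    {eta : ℕ → ι → ℝ} (heta : ∀ t ∈ Icc 1 T, ∀ i, eta t i = learningRate η T x t i)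
    {psi : ℕ → (ι → ℝ) → ℝ} (hpsi : ∀ t p, psi t p =
      β / 2 * ∑ i, ∑ j, p i * A t i j * p j + ∑ i, 1 / eta t i * log (1 / p i))
    {gpsi : ℕ → (ι → ℝ) → ι → ℝ} (hgpsi : ∀ t p i, gpsi t p i =
      β * (∑ j, A t i j * p j) - 1 / eta t i * (1 / p i))
    {D : ℕ → (ι → ℝ) → (ι → ℝ) → ℝ} (hD : ∀ t p q, D t p q =
      psi t p - psi t q - ∑ i, gpsi t q i * (p i - q i))
    (hmin : ∀ t ∈ Icc 1 T, IsMinOn (fun y ↦ y ⬝ᵥ grad t + D t y (x t))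
      (truncatedSimplex ι (1 / (Fintype.card ι * T))) (x (t + 1))) :
    IsBarronsRun T β η r x := by
  refine ⟨hx1, hx, fun t ht ↦ ?_⟩
  obtain ⟨h1t, htT⟩ := mem_Icc.1 ht
  have hδ : 0 < 1 / ((Fintype.card ι : ℝ) * T) := by
    have : 0 < T := by omega
    positivity
  have hgram : A t = barronsGram r x t := by
    rw [eq_regularizedGram hA0 hA htT, funext hgrad, barronsGram]
  have hsymm : (barronsGram r x t).IsSymm :=
    isHermitian_iff_isSymm.1 posDef_barronsGram.isHermitian
  have hobjective : ∀ y ∈ truncatedSimplex ι (1 / (Fintype.card ι * T)),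
      y ⬝ᵥ grad t + D t y (x t) = y ⬝ᵥ logLossGrad (x t) (r t) +
        barrierDiv β (barronsGram r x t) (fun i ↦ 1 / learningRate η T x t i) y (x t) := by
    intro y hy
    rw [← bregman_eq_barrierDiv hsymm (pos_of_mem_truncatedSimplex hδ hy)
      (pos_of_mem_truncatedSimplex hδ (hx t (Icc_subset_Icc_right T.le_succ ht)))]
    simp only [hD, hpsi, hgpsi, hgrad, hgram, heta t ht]
  refine isMinOn_iff.2 fun y hy ↦ ?_
  rw [← hobjective y hy, ← hobjective _ (hx (t + 1) (by simpa using htT))]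
  exact hmin t ht hy

theorem IsBarronsRun.loss_sub_le_barronsPotential_sub (h : IsBarronsRun T β η r x) (hβ0 : 0 < β)
    (hβ : β ≤ 1 / 2) (hη : 0 < η) (hT : Fintype.card ι < T) (hr : ∀ s ∈ Icc 1 T, 0 < r s)
    (hu : u ∈ truncatedSimplex ι (1 / (Fintype.card ι * T)))
    (hβu : ∀ s ∈ Icc 1 T, 8 * β * |logLossGrad (x s) (r s) ⬝ᵥ (u - x s)| ≤ 1) (ht : t < T) :
    -log (x (t + 1) ⬝ᵥ r (t + 1)) - -log (u ⬝ᵥ r (t + 1)) ≤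
      barronsPotential T β η r x u t - barronsPotential T β η r x u (t + 1) := by
  have hmem : t + 1 ∈ Icc 1 T := by simpa using ht
  have hδ := one_div_card_mul_pos hT
  have hx := h.mem (t + 1) (by simp; omega)
  have hloss := log_loss_sub_le hβ
    (dotProduct_pos_of_mem_truncatedSimplex hδ hx (hr _ hmem))
    (dotProduct_pos_of_mem_truncatedSimplex hδ hu (hr _ hmem)) (hβu _ hmem)
  have hmirror := dotProduct_sub_sub_sq_le_of_isMinOn hβ0 (posDef_barronsGram (r := r) (x := x))
    (fun i ↦ by rw [one_div_learningRate]; positivity) convex_truncatedSimplex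
    (fun y hy ↦ pos_of_mem_truncatedSimplex hδ hy) hx (h.mem (t + 2) (by simp; omega)) hu
    (barronsGram_succ (r := r) ▸ h.isMinOn (t + 1) hmem)
  have hrates := barrierDiv_add_ratePotential_succ_le (β := β) hη hT hx hu (barronsGram r x t)
  rw [← barronsGram_succ] at hmirror
  simp only [barronsPotential]
  linarith

theorem IsBarronsRun.barronsPotential_zero_le (h : IsBarronsRun T β η r x) (hβ : 0 < β)
    (hη : 0 < η) (hT : Fintype.card ι < T)
    (hu : u ∈ truncatedSimplex ι (1 / (Fintype.card ι * T))) :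
    barronsPotential T β η r x u 0 ≤
      β * Fintype.card ι + 6 * Fintype.card ι * log T / η
        - 1 / (2 * β) * log (barronsGram r x 0).det := by
  have hquad : β / 2 * ((u - x 1) ⬝ᵥ barronsGram r x 0 *ᵥ (u - x 1)) ≤ β * Fintype.card ι := by
    have hdist := dotProduct_sub_self_le_two hu.1 (h.mem 1 (by simp)).1
    rw [barronsGram_zero, smul_mulVec, one_mulVec, dotProduct_smul, smul_eq_mul]
    calc _ ≤ β / 2 * (Fintype.card ι * 2) := by gcongr
      _ = β * Fintype.card ι := by ring
  have hscaled : 1 / η * ∑ i, (itakuraSaito (u i) (x 1 i)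
      + ratePotential (log T) (Fintype.card ι * u i) 0) ≤ 6 * Fintype.card ι * log T / η := by
    rw [one_div_mul_eq_div, funext h.one_eq]
    gcongr
    exact sum_itakuraSaito_add_ratePotential_le hT hu
  rw [sum_add_distrib, mul_add] at hscaled
  simp only [barronsPotential, barrierDiv, one_div_learningRate, rateExponent_zero, neg_zero,
    Real.exp_zero, mul_one, ← mul_sum, zero_add]
  linarith

theorem IsBarronsRun.le_barronsPotential (h : IsBarronsRun T β η r x) (hβ : 0 < β)
    (hη : 0 < η) (hT : Fintype.card ι < T)
    (hu : u ∈ truncatedSimplex ι (1 / (Fintype.card ι * T))) :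
    1 / (8 * η * log T) * (∑ i, ⨆ t ∈ Icc 1 T, u i / x t i)
        - 1 / (2 * β) * log (barronsGram r x T).det ≤ barronsPotential T β η r x u T := by
  have hL : 0 < log T := one_half_pos.trans_le (half_le_log_of_card_lt hT)
  have hδ := one_div_card_mul_pos hT
  have hN : (0 : ℝ) < Fintype.card ι := Nat.cast_pos.2 Fintype.card_pos
  have hdiv : 0 ≤ barrierDiv β (barronsGram r x T) (fun i ↦ 1 / learningRate η T x T i) u
      (x (T + 1)) := by
    refine barrierDiv_nonneg hβ.le posDef_barronsGram.posSemidef (fun i ↦ ?_)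
      (pos_of_mem_truncatedSimplex hδ hu)
      (pos_of_mem_truncatedSimplex hδ (h.mem (T + 1) (by simp)))
    rw [one_div_learningRate]
    positivity
  have hrate (i : ι) : 1 / (8 * log T) * ⨆ t ∈ Icc 1 T, u i / x t i ≤
      ratePotential (log T) (Fintype.card ι * u i) (rateExponent T x T i) := by
    have hui := hu.1.1 i
    refine le_add_of_le_of_nonneg ?_ (by positivity)
    gcongr
    refine biSup_le_of_nonneg (by positivity) fun t ht ↦ ?_
    have hxt := pos_of_mem_truncatedSimplex hδ
      (h.mem t (Icc_subset_Icc_right T.le_succ ht)) i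
    rw [← mul_exp_mul_log_div hxt hN hL.ne']
    gcongr
    exact le_biSup_of_mem (f := fun s ↦ log (1 / (Fintype.card ι * x s i)) / log T) ht
  have hsum : 1 / (8 * η * log T) * ∑ i, ⨆ t ∈ Icc 1 T, u i / x t i ≤
      1 / η * ∑ i, ratePotential (log T) (Fintype.card ι * u i) (rateExponent T x T i) := by
    calc _ = 1 / η * ∑ i, 1 / (8 * log T) * ⨆ t ∈ Icc 1 T, u i / x t i := by
          rw [← mul_sum, ← mul_assoc, one_div_mul_one_div]
          ring_nf
      _ ≤ _ := by gcongr with i; exact hrate i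
  rw [barronsPotential]
  linarith

theorem IsBarronsRun.log_det_barronsGram_sub_le (h : IsBarronsRun T β η r x)
    (hT : Fintype.card ι < T) (hr : ∀ s ∈ Icc 1 T, 0 < r s) :
    log (barronsGram r x T).det - log (barronsGram r x 0).det ≤
      4 * Fintype.card ι * log T := by
  have hN : (0 : ℝ) < Fintype.card ι := Nat.cast_pos.2 Fintype.card_pos
  have hNT : (Fintype.card ι : ℝ) + 1 ≤ T := by exact_mod_cast hT
  have hgrad : ∀ s ∈ Icc 1 T, logLossGrad (x s) (r s) ⬝ᵥ logLossGrad (x s) (r s) ≤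
      ((1 / (Fintype.card ι * T : ℝ))⁻¹) ^ 2 := fun s hs ↦
    logLossGrad_dotProduct_self_le (one_div_card_mul_pos hT)
      (h.mem s (Icc_subset_Icc_right T.le_succ hs)) (hr s hs)
  calc log (barronsGram r x T).det - log (barronsGram r x 0).det
      ≤ Fintype.card ι * log (Fintype.card ι
          + T * ((1 / (Fintype.card ι * T : ℝ))⁻¹) ^ 2 / Fintype.card ι) :=
        log_det_regularizedGram_sub_le hN hgrad
    _ ≤ Fintype.card ι * log (T ^ 4) := by
        gcongr
        calc _ = (Fintype.card ι : ℝ) * (1 + T ^ 3) := by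
              rw [one_div, inv_inv]
              field_simp
          _ ≤ (T - 1) * (1 + T ^ 3) := by gcongr; linarith
          _ ≤ T ^ 4 := by nlinarith [pow_le_pow_left₀ zero_le_one (by linarith : (1 : ℝ) ≤ T) 2]
    _ = 4 * Fintype.card ι * log T := by
        rw [Real.log_pow]
        ring

end BarronsRun

theorem barrons_regret_bound_general {ι : Type*} [Fintype ι] [DecidableEq ι] {T : ℕ} {β η : ℝ}
    {r x : ℕ → ι → ℝ} {u : ι → ℝ} (h : IsBarronsRun T β η r x) (hβ0 : 0 < β)
    (hβ : β ≤ 1 / 2) (hη : 0 < η) (hT : Fintype.card ι < T) (hr : ∀ s ∈ Icc 1 T, 0 < r s)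
    (hu : u ∈ truncatedSimplex ι (1 / (Fintype.card ι * T)))
    (hβu : ∀ s ∈ Icc 1 T, 8 * β * |logLossGrad (x s) (r s) ⬝ᵥ (u - x s)| ≤ 1) :
    ∑ t ∈ Icc 1 T, -log (x t ⬝ᵥ r t) - ∑ t ∈ Icc 1 T, -log (u ⬝ᵥ r t) ≤
      6 * Fintype.card ι * log T / η + 3 * Fintype.card ι * log T / β
        - 1 / (8 * η * log T) * ∑ i, ⨆ t ∈ Icc 1 T, u i / x t i := by
  have : Nonempty ι := not_isEmpty_iff.1 fun _ ↦ by simpa using hu.1.2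
  have hL := half_le_log_of_card_lt hT
  have htelescope := sum_Icc_one_le_sub
    (f := fun t ↦ -log (x t ⬝ᵥ r t) - -log (u ⬝ᵥ r t)) (V := barronsPotential T β η r x u)
    fun _ ht ↦ h.loss_sub_le_barronsPotential_sub hβ0 hβ hη hT hr hu hβu ht
  have hinitial := h.barronsPotential_zero_le hβ0 hη hT hu
  have hfinal := h.le_barronsPotential hβ0 hη hT hu
  have hdet : 1 / (2 * β) * (log (barronsGram r x T).det - log (barronsGram r x 0).det) ≤
      2 * Fintype.card ι * log T / β := by
    calc _ ≤ 1 / (2 * β) * (4 * Fintype.card ι * log T) := by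
          gcongr
          exact h.log_det_barronsGram_sub_le hT hr
      _ = 2 * Fintype.card ι * log T / β := by
          field_simp
          ring
  have hquad : β * Fintype.card ι ≤ Fintype.card ι * log T / β := by
    rw [le_div_iff₀ hβ0, mul_right_comm, mul_comm]
    gcongr
    nlinarith
  rw [sum_sub_distrib] at htelescope
  linear_combination htelescope + hinitial + hfinal + hdet + hquad

theorem barrons_regret_bound :
    ∃ C : ℝ, 0 < C ∧
    ∀ (N T : ℕ) (_hN : 2 ≤ N) (_hT : N < T)
      (β η : ℝ) (_hβ0 : 0 < β) (_hβ : β ≤ 1 / 2) (_hη0 : 0 < η) (_hη : η ≤ 1)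
      -- reward vectors: nonnegative with maximum coordinate equal to 1
      (r : ℕ → Fin N → ℝ)
      (_hr : ∀ t ∈ Finset.Icc 1 T, (∀ i, 0 ≤ r t i) ∧ (∃ i, r t i = 1) ∧ ∀ i, r t i ≤ 1)
      -- the iterates x_1, ..., x_{T+1}
      (x : ℕ → Fin N → ℝ)
      (_hx1 : ∀ i, x 1 i = 1 / N)
      (_hxmem : ∀ t ∈ Finset.Icc 1 (T + 1),
          (∀ i, 0 ≤ x t i) ∧ (∑ i, x t i) = 1 ∧ ∀ i, 1 / ((N : ℝ) * T) ≤ x t i)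
      -- the gradients ∇_t = -r_t / ⟨x_t, r_t⟩
      (grad : ℕ → Fin N → ℝ)
      (_hgrad : ∀ t i, grad t i = -(r t i) / ∑ j, x t j * r t j)
      -- the matrices A_t
      (A : ℕ → Matrix (Fin N) (Fin N) ℝ)
      (_hA0 : A 0 = (N : ℝ) • (1 : Matrix (Fin N) (Fin N) ℝ))
      (_hA : ∀ t ∈ Finset.Icc 1 T, ∀ i j, A t i j = A (t - 1) i j + grad t i * grad t j)
      -- the individual learning rates η_{t,i}
      (eta : ℕ → Fin N → ℝ)
      (_heta : ∀ t ∈ Finset.Icc 1 T, ∀ i,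
          eta t i = η * Real.exp (⨆ s ∈ Finset.Icc 1 t,
            Real.log (1 / ((N : ℝ) * x s i)) / Real.log T))
      -- the regularizer ψ_t, its gradient, and its Bregman divergence
      (psi : ℕ → (Fin N → ℝ) → ℝ)
      (_hpsi : ∀ t p, psi t p =
          β / 2 * ∑ i, ∑ j, p i * A t i j * p j + ∑ i, (1 / eta t i) * Real.log (1 / p i))
      (gpsi : ℕ → (Fin N → ℝ) → Fin N → ℝ)
      (_hgpsi : ∀ t p i, gpsi t p i = β * (∑ j, A t i j * p j) - (1 / eta t i) * (1 / p i))
      (D : ℕ → (Fin N → ℝ) → (Fin N → ℝ) → ℝ)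
      (_hD : ∀ t p q, D t p q = psi t p - psi t q - ∑ i, gpsi t q i * (p i - q i))
      -- x_{t+1} minimizes ⟨x, ∇_t⟩ + D_{ψ_t}(x, x_t) over Δ̄_N
      (_hmin : ∀ t ∈ Finset.Icc 1 T, ∀ y : Fin N → ℝ,
          ((∀ i, 0 ≤ y i) ∧ (∑ i, y i) = 1 ∧ ∀ i, 1 / ((N : ℝ) * T) ≤ y i) →
          (∑ i, x (t + 1) i * grad t i) + D t (x (t + 1)) (x t)
            ≤ (∑ i, y i * grad t i) + D t y (x t))
      -- the comparator u ∈ Δ̄_N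
      (u : Fin N → ℝ)
      (_hu : (∀ i, 0 ≤ u i) ∧ (∑ i, u i) = 1 ∧ ∀ i, 1 / ((N : ℝ) * T) ≤ u i)
      -- β ≤ α_T(u), i.e. β ≤ 1/2 (above) and β ≤ 1/(8|⟨∇_s, u - x_s⟩|) for all s ∈ [T]
      (_halpha : ∀ s ∈ Finset.Icc 1 T, 8 * β * |∑ i, grad s i * (u i - x s i)| ≤ 1),
      (∑ t ∈ Finset.Icc 1 T, -Real.log (∑ i, x t i * r t i))
        - ∑ t ∈ Finset.Icc 1 T, -Real.log (∑ i, u i * r t i)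
      ≤ C * N * Real.log T / η + 8 * N * Real.log T / β
        - (1 / (8 * η * Real.log T)) * ∑ i, ⨆ t ∈ Finset.Icc 1 T, u i / x t i := by
  refine ⟨6, by norm_num, ?_⟩
  intro N T hN hT β η hβ0 hβ hη0 _ r hr x hx1 hxmem grad hgrad A hA0 hA eta heta psi hpsi gpsi
    hgpsi D hD hmin u hu halpha
  have : NeZero N := ⟨by omega⟩
  have hgrad' (t : ℕ) : grad t = logLossGrad (x t) (r t) := by
    ext i
    simp [hgrad, logLossGrad, dotProduct, div_eq_inv_mul]
  have hrun : IsBarronsRun T β η r x := by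
    refine isBarronsRun_of_regularizer ?_ ?_ hgrad' ?_ hA ?_ hpsi hgpsi hD ?_
    all_goals simp only [Fintype.card_fin, mem_truncatedSimplex, learningRate, rateExponent]
    exacts [hx1, hxmem, hA0, heta, fun t ht y hy ↦ hmin t ht y (mem_truncatedSimplex.1 hy)]
  have hrpos : ∀ t ∈ Finset.Icc 1 T, 0 < r t := fun t ht ↦ by
    obtain ⟨hr0, ⟨k, hk⟩, -⟩ := hr t ht
    exact lt_of_le_of_ne hr0 fun h ↦ by simp [← h] at hk
  have hbound := barrons_regret_bound_general hrun hβ0 hβ hη0 (by simpa using hT) hrpos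
    (u := u) (by simpa only [Fintype.card_fin, mem_truncatedSimplex] using hu)
    (by simp only [← hgrad']; exact halpha)
  simp only [Fintype.card_fin] at hbound
  have hslack : 3 * N * log T / β ≤ 8 * N * log T / β := by gcongr; norm_num
  exact hbound.trans (by linarith)
end

section
/- Let the BARRONS iterates x_1, …, x_T be as in the context with parameters 0 < β ≤ 1/2 and 0 < η ≤ 1. Then for every t ∈ [T], ⟨∇_t, x_t − x_{t+1}⟩ ≤ (2/β)·∇_tᵀ A_t^{−1} ∇_t. -/
/-!
Comparing the minimizer `x (t + 1)` with the feasible point `x t` shows that the Bregman divergence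
`D (x (t + 1)) (x t)` is at most `⟨∇_t, d⟩`, where `d = x t - x (t + 1)`. The log-barrier part of
this divergence is nonnegative and its quadratic part is `β / 2 * dᵀ A d`, so
`β / 2 * dᵀ A d ≤ ⟨∇_t, d⟩`. Young's inequality in the norm of `A` and its dual,
`β * ⟨∇_t, d⟩ ≤ (β / 2) ^ 2 * dᵀ A d + ∇_tᵀ A⁻¹ ∇_t`, then absorbs the quadratic term on the right.
-/

section MirrorStep

open Matrix

variable {n : Type*} [Fintype n]

/-- The Bregman divergence of a function `ψ` on `ℝⁿ`. The gradient of `ψ` is passed explicitly as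
`ψ'`, so that no differentiability needs to be carried around. -/
noncomputable def bregmanDiv (ψ : (n → ℝ) → ℝ) (ψ' : (n → ℝ) → n → ℝ) (p q : n → ℝ) : ℝ :=
  ψ p - ψ q - ψ' q ⬝ᵥ (p - q)

theorem bregmanDiv_self (ψ : (n → ℝ) → ℝ) (ψ' : (n → ℝ) → n → ℝ) (p : n → ℝ) :
    bregmanDiv ψ ψ' p p = 0 := by
  simp [bregmanDiv]

theorem bregmanDiv_add (ψ φ : (n → ℝ) → ℝ) (ψ' φ' : (n → ℝ) → n → ℝ) (p q : n → ℝ) :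
    bregmanDiv (ψ + φ) (ψ' + φ') p q = bregmanDiv ψ ψ' p q + bregmanDiv φ φ' p q := by
  simp only [bregmanDiv, Pi.add_apply, add_dotProduct]
  ring

theorem bregmanDiv_quadratic {A : Matrix n n ℝ} (hA : A.IsSymm) (β : ℝ) (p q : n → ℝ) :
    bregmanDiv (fun p => β / 2 * (p ⬝ᵥ A *ᵥ p)) (fun p => β • A *ᵥ p) p q =
      β / 2 * ((p - q) ⬝ᵥ A *ᵥ (p - q)) := by
  have hswap : q ⬝ᵥ A *ᵥ p = p ⬝ᵥ A *ᵥ q := by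
    simpa only [hA.eq] using dotProduct_transpose_mulVec A q p
  simp only [bregmanDiv, smul_dotProduct, smul_eq_mul, dotProduct_comm (A *ᵥ q), mulVec_sub,
    sub_dotProduct, dotProduct_sub, hswap]
  ring

/-- The log-barrier of the positive orthant with weight `c i` on the `i`-th coordinate. -/
noncomputable def logBarrier (c p : n → ℝ) : ℝ :=
  ∑ i, c i * Real.log (1 / p i)

/-- The gradient of `logBarrier c` at a point of the open positive orthant. -/
noncomputable def logBarrierGrad (c p : n → ℝ) : n → ℝ :=
  fun i => -(c i * (1 / p i))

theorem bregmanDiv_logBarrier_nonneg {c p q : n → ℝ} (hc : ∀ i, 0 ≤ c i) (hp : ∀ i, 0 < p i)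
    (hq : ∀ i, 0 < q i) : 0 ≤ bregmanDiv (logBarrier c) (logBarrierGrad c) p q := by
  have hsum : bregmanDiv (logBarrier c) (logBarrierGrad c) p q =
      ∑ i, c i * (p i / q i - 1 - Real.log (p i / q i)) := by
    simp only [bregmanDiv, logBarrier, logBarrierGrad, dotProduct, ← Finset.sum_sub_distrib]
    refine Finset.sum_congr rfl fun i _ => ?_
    rw [one_div, one_div, Real.log_inv, Real.log_inv, Real.log_div (hp i).ne' (hq i).ne',
      Pi.sub_apply]
    field_simp [(hq i).ne']
    ring
  rw [hsum]
  exact Finset.sum_nonneg fun i _ => mul_nonneg (hc i) <|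
    sub_nonneg.2 (Real.log_le_sub_one_of_pos (div_pos (hp i) (hq i)))

theorem bregmanDiv_le_dotProduct_sub_of_isMinOn {ψ : (n → ℝ) → ℝ} {ψ' : (n → ℝ) → n → ℝ}
    {K : Set (n → ℝ)} {g x y : n → ℝ} (hx : x ∈ K)
    (hy : IsMinOn (fun p => p ⬝ᵥ g + bregmanDiv ψ ψ' p x) K y) :
    bregmanDiv ψ ψ' y x ≤ g ⬝ᵥ (x - y) := by
  have hle := isMinOn_iff.1 hy x hx
  rw [bregmanDiv_self, dotProduct_comm y, dotProduct_comm x] at hle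
  rw [dotProduct_sub]
  linarith

theorem two_mul_dotProduct_le_of_posDef [DecidableEq n] {A : Matrix n n ℝ} (hA : A.PosDef)
    (g d : n → ℝ) : 2 * (g ⬝ᵥ d) ≤ d ⬝ᵥ A *ᵥ d + g ⬝ᵥ A⁻¹ *ᵥ g := by
  have hcancel : A *ᵥ A⁻¹ *ᵥ g = g := by
    rw [mulVec_mulVec, mul_nonsing_inv A ((isUnit_iff_isUnit_det A).1 hA.isUnit), one_mulVec]
  have hswap : (A⁻¹ *ᵥ g) ⬝ᵥ A *ᵥ d = g ⬝ᵥ d := by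
    rw [← dotProduct_transpose_mulVec, (isHermitian_iff_isSymm.1 hA.isHermitian).eq, hcancel,
      dotProduct_comm]
  have hsq : 0 ≤ (d - A⁻¹ *ᵥ g) ⬝ᵥ A *ᵥ (d - A⁻¹ *ᵥ g) :=
    hA.posSemidef.dotProduct_mulVec_nonneg (d - A⁻¹ *ᵥ g)
  rw [mulVec_sub, hcancel, sub_dotProduct, dotProduct_sub, dotProduct_sub, hswap,
    dotProduct_comm d g, dotProduct_comm (A⁻¹ *ᵥ g) g] at hsq
  linarith

theorem dotProduct_le_of_quadratic_le [DecidableEq n] {A : Matrix n n ℝ} (hA : A.PosDef)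
    {β : ℝ} (hβ : 0 < β) {g d : n → ℝ} (hgd : β / 2 * (d ⬝ᵥ A *ᵥ d) ≤ g ⬝ᵥ d) :
    g ⬝ᵥ d ≤ 2 / β * (g ⬝ᵥ A⁻¹ *ᵥ g) := by
  have hyoung := two_mul_dotProduct_le_of_posDef hA g ((β / 2) • d)
  simp only [mulVec_smul, smul_dotProduct, dotProduct_smul, smul_eq_mul] at hyoung
  have habsorb := mul_le_mul_of_nonneg_left hgd (half_pos hβ).le
  rw [div_mul_eq_mul_div, le_div_iff₀ hβ]
  linarith

theorem posDef_of_rankOne_updates {m : Type*} [Finite m] {T : ℕ} {A : ℕ → Matrix m m ℝ}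
    {g : ℕ → m → ℝ} (hA0 : (A 0).PosDef)
    (hA : ∀ t < T, A (t + 1) = A t + vecMulVec (g (t + 1)) (g (t + 1))) :
    ∀ t ≤ T, (A t).PosDef
  | 0, _ => hA0
  | t + 1, ht => by
    rw [hA t ht]
    exact (posDef_of_rankOne_updates hA0 hA t (Nat.le_of_succ_le ht)).add_posSemidef
      (posSemidef_vecMulVec_self_star (g (t + 1)))

/-- The regularizer `ψ_t` of BARRONS, as a function of the matrix `A_t` and of the vector `eta` of
learning rates. -/
noncomputable def barronsRegularizer (β : ℝ) (A : Matrix n n ℝ) (eta : n → ℝ) : (n → ℝ) → ℝ :=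
  (fun p => β / 2 * (p ⬝ᵥ A *ᵥ p)) + logBarrier (fun i => 1 / eta i)

/-- The gradient of `barronsRegularizer β A eta` on the open positive orthant, for symmetric `A`. -/
noncomputable def barronsRegularizerGrad (β : ℝ) (A : Matrix n n ℝ) (eta : n → ℝ) :
    (n → ℝ) → n → ℝ :=
  (fun p => β • A *ᵥ p) + logBarrierGrad (fun i => 1 / eta i)

theorem quadratic_le_bregmanDiv_barronsRegularizer {A : Matrix n n ℝ} (hA : A.IsSymm) (β : ℝ)
    {eta p q : n → ℝ} (heta : ∀ i, 0 < eta i) (hp : ∀ i, 0 < p i) (hq : ∀ i, 0 < q i) :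
    β / 2 * ((q - p) ⬝ᵥ A *ᵥ (q - p)) ≤
      bregmanDiv (barronsRegularizer β A eta) (barronsRegularizerGrad β A eta) p q := by
  rw [barronsRegularizer, barronsRegularizerGrad, bregmanDiv_add, bregmanDiv_quadratic hA,
    ← neg_sub p q, mulVec_neg, neg_dotProduct_neg]
  exact le_add_of_nonneg_right <|
    bregmanDiv_logBarrier_nonneg (fun i => (one_div_pos.2 (heta i)).le) hp hq

theorem dotProduct_sub_le_of_isMinOn_barronsRegularizer [DecidableEq n] {A : Matrix n n ℝ}
    (hA : A.PosDef) {β : ℝ} (hβ : 0 < β) {eta : n → ℝ} (heta : ∀ i, 0 < eta i)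
    {K : Set (n → ℝ)} (hK : ∀ p ∈ K, ∀ i, 0 < p i) {g x y : n → ℝ} (hx : x ∈ K) (hy : y ∈ K)
    (hmin : IsMinOn (fun p => p ⬝ᵥ g +
      bregmanDiv (barronsRegularizer β A eta) (barronsRegularizerGrad β A eta) p x) K y) :
    g ⬝ᵥ (x - y) ≤ 2 / β * (g ⬝ᵥ A⁻¹ *ᵥ g) :=
  dotProduct_le_of_quadratic_le hA hβ <|
    (quadratic_le_bregmanDiv_barronsRegularizer (isHermitian_iff_isSymm.1 hA.isHermitian) β heta
      (hK y hy) (hK x hx)).trans (bregmanDiv_le_dotProduct_sub_of_isMinOn hx hmin)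

theorem sum_sum_mul_mul_eq_dotProduct_mulVec {R : Type*} [NonUnitalSemiring R] (M : Matrix n n R)
    (p q : n → R) : ∑ i, ∑ j, p i * M i j * q j = p ⬝ᵥ M *ᵥ q := by
  simp only [dotProduct, mulVec, Finset.mul_sum, mul_assoc]

end MirrorStep

open Matrix in
theorem barrons_per_round_linear_term_general {n : Type*} [Fintype n] [DecidableEq n] {T : ℕ}
    {β : ℝ} (hβ : 0 < β) {K : Set (n → ℝ)} (hK : ∀ p ∈ K, ∀ i, 0 < p i)
    {x : ℕ → n → ℝ} (hx : ∀ t ∈ Finset.Icc 1 (T + 1), x t ∈ K) {g : ℕ → n → ℝ}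
    {A : ℕ → Matrix n n ℝ} (hA0 : (A 0).PosDef)
    (hA : ∀ t ∈ Finset.Icc 1 T, ∀ i j, A t i j = A (t - 1) i j + g t i * g t j)
    {eta : ℕ → n → ℝ} (heta : ∀ t ∈ Finset.Icc 1 T, ∀ i, 0 < eta t i)
    {psi : ℕ → (n → ℝ) → ℝ}
    (hpsi : ∀ t p, psi t p =
      β / 2 * ∑ i, ∑ j, p i * A t i j * p j + ∑ i, (1 / eta t i) * Real.log (1 / p i))
    {gpsi : ℕ → (n → ℝ) → n → ℝ}
    (hgpsi : ∀ t p i, gpsi t p i = β * (∑ j, A t i j * p j) - (1 / eta t i) * (1 / p i))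
    {D : ℕ → (n → ℝ) → (n → ℝ) → ℝ}
    (hD : ∀ t p q, D t p q = psi t p - psi t q - ∑ i, gpsi t q i * (p i - q i))
    (hmin : ∀ t ∈ Finset.Icc 1 T, ∀ y ∈ K,
      (∑ i, x (t + 1) i * g t i) + D t (x (t + 1)) (x t) ≤ (∑ i, y i * g t i) + D t y (x t)) :
    ∀ t ∈ Finset.Icc 1 T, ∑ i, g t i * (x t i - x (t + 1) i) ≤
      (2 / β) * ∑ i, ∑ j, g t i * (A t)⁻¹ i j * g t j := by
  intro t ht
  obtain ⟨ht1, htT⟩ := Finset.mem_Icc.1 ht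
  have hpd : (A t).PosDef := posDef_of_rankOne_updates hA0
    (fun s hs => Matrix.ext (hA (s + 1) (Finset.mem_Icc.2 ⟨s.succ_pos, hs⟩))) t htT
  have hpsi_eq : psi t = barronsRegularizer β (A t) (eta t) := funext fun p => by
    rw [hpsi, sum_sum_mul_mul_eq_dotProduct_mulVec]
    rfl
  have hgpsi_eq : gpsi t = barronsRegularizerGrad β (A t) (eta t) :=
    funext₂ fun p i => (hgpsi t p i).trans (sub_eq_add_neg _ _)
  have hD_eq : D t = bregmanDiv (psi t) (gpsi t) := funext₂ (hD t)
  rw [sum_sum_mul_mul_eq_dotProduct_mulVec]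
  refine dotProduct_sub_le_of_isMinOn_barronsRegularizer hpd hβ (heta t ht) hK
    (hx t (Finset.mem_Icc.2 ⟨ht1, htT.trans T.le_succ⟩))
    (hx (t + 1) (Finset.mem_Icc.2 ⟨t.succ_pos, Nat.succ_le_succ htT⟩)) ?_
  rw [← hpsi_eq, ← hgpsi_eq, ← hD_eq]
  exact isMinOn_iff.2 (hmin t ht)

theorem barrons_per_round_linear_term
    (N T : ℕ) (hN : 2 ≤ N) (hT : N < T)
    (β η : ℝ) (hβ0 : 0 < β) (hβ : β ≤ 1 / 2) (hη0 : 0 < η) (hη : η ≤ 1)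
    -- reward vectors: nonnegative with maximum coordinate equal to 1
    (r : ℕ → Fin N → ℝ)
    (hr : ∀ t ∈ Finset.Icc 1 T, (∀ i, 0 ≤ r t i) ∧ (∃ i, r t i = 1) ∧ ∀ i, r t i ≤ 1)
    -- the iterates x_1, ..., x_{T+1}
    (x : ℕ → Fin N → ℝ)
    (hx1 : ∀ i, x 1 i = 1 / N)
    (hxmem : ∀ t ∈ Finset.Icc 1 (T + 1),
        (∀ i, 0 ≤ x t i) ∧ (∑ i, x t i) = 1 ∧ ∀ i, 1 / ((N : ℝ) * T) ≤ x t i)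
    -- the gradients ∇_t = -r_t / ⟨x_t, r_t⟩
    (grad : ℕ → Fin N → ℝ)
    (hgrad : ∀ t i, grad t i = -(r t i) / ∑ j, x t j * r t j)
    -- the matrices A_t
    (A : ℕ → Matrix (Fin N) (Fin N) ℝ)
    (hA0 : A 0 = (N : ℝ) • (1 : Matrix (Fin N) (Fin N) ℝ))
    (hA : ∀ t ∈ Finset.Icc 1 T, ∀ i j, A t i j = A (t - 1) i j + grad t i * grad t j)
    -- the individual learning rates η_{t,i}
    (eta : ℕ → Fin N → ℝ)
    (heta : ∀ t ∈ Finset.Icc 1 T, ∀ i,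
        eta t i = η * Real.exp (⨆ s ∈ Finset.Icc 1 t,
          Real.log (1 / ((N : ℝ) * x s i)) / Real.log T))
    -- the regularizer ψ_t, its gradient, and its Bregman divergence
    (psi : ℕ → (Fin N → ℝ) → ℝ)
    (hpsi : ∀ t p, psi t p =
        β / 2 * ∑ i, ∑ j, p i * A t i j * p j + ∑ i, (1 / eta t i) * Real.log (1 / p i))
    (gpsi : ℕ → (Fin N → ℝ) → Fin N → ℝ)
    (hgpsi : ∀ t p i, gpsi t p i = β * (∑ j, A t i j * p j) - (1 / eta t i) * (1 / p i))
    (D : ℕ → (Fin N → ℝ) → (Fin N → ℝ) → ℝ)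
    (hD : ∀ t p q, D t p q = psi t p - psi t q - ∑ i, gpsi t q i * (p i - q i))
    -- x_{t+1} minimizes ⟨x, ∇_t⟩ + D_{ψ_t}(x, x_t) over Δ̄_N
    (hmin : ∀ t ∈ Finset.Icc 1 T, ∀ y : Fin N → ℝ,
        ((∀ i, 0 ≤ y i) ∧ (∑ i, y i) = 1 ∧ ∀ i, 1 / ((N : ℝ) * T) ≤ y i) →
        (∑ i, x (t + 1) i * grad t i) + D t (x (t + 1)) (x t)
          ≤ (∑ i, y i * grad t i) + D t y (x t))
    :
    ∀ t ∈ Finset.Icc 1 T,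
      ∑ i, grad t i * (x t i - x (t + 1) i)
        ≤ (2 / β) * ∑ i, ∑ j, grad t i * (A t)⁻¹ i j * grad t j := by
  have hN0 : (0 : ℝ) < N := Nat.cast_pos.2 (by omega)
  have hT0 : (0 : ℝ) < T := Nat.cast_pos.2 (by omega)
  exact barrons_per_round_linear_term_general hβ0
    (fun p hp i => (one_div_pos.2 (mul_pos hN0 hT0)).trans_le (hp.2.2 i)) hxmem
    (hA0 ▸ Matrix.PosDef.one.smul hN0) hA
    (fun t ht i => heta t ht i ▸ mul_pos hη0 (Real.exp_pos _)) hpsi hgpsi hD hmin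
end
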